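/- (Error bound of Theorem 1, capacity-achieving rateless codes.) Let β : ℕ → ℝ be any function with β(k) ≥ 1 for all k and β(k) → ∞ as k → ∞. Then there exist, for every k ≥ 1, an encoding function E_k : (ZMod 2)^k → (ℕ → ZMod 2) and, for every n ≥ 1, a decoding function D_{k,n} : (ZMod 2)^n → (ZMod 2)^k, such that for every p ∈ (0, 1/2) and every δ ∈ (0, 1 − H(p)) there exist a constant c > 0 and an integer k₀ with the following property: for every k ≥ k₀, every integer n ≥ k/(1 − H(p) − δ), and every message m ∈ (ZMod 2)^k, the BSC(p)-probability of the set {η ∈ (ZMod 2)^n : D_{k,n}((E_k m)|_n + η) ≠ m} is at most 2^{−c·k/β(k)}, where (E_k m)|_n ∈ (ZMod 2)^n denotes the first n bits of E_k m. -/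

import Mathlib

/-!
Encode by a random linear map and decode to a nearest codeword; neither involves `p`. A decoding
error for the noise `η` produces a nonzero message `a` with `wt (C a + η) ≤ wt η`. For a uniform
linear `C` of length `n` each codeword `C a` with `a ≠ 0` is uniform, so the expected number of
such `η` of weight `t` is at most `2 ^ (k - n)` times the size of the Hamming sphere times the size
of the Hamming ball of radius `t`. By averaging over the pairs `(n, t)` with `n, t ≤ k ^ 2`, a
single map exceeds none of these expectations by more than the factor `(k ^ 2 + 1) ^ 2`. This is a
property of the code alone, which is why one encoder serves all `p` and `δ`.

Given `p` and `δ`, noise of weight above `(p + ε) n` has probability at most `exp (-ε² n / 4)`, and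
for `t ≤ (p + ε) n` the Hamming ball has at most `2 ^ (n (H(p) + δ / 2))` points once `ε` is small,
so the remaining noise contributes at most `(k ^ 2 + 1) ^ 2 * 2 ^ (-n δ / 2)`. All codewords vanish
beyond the first `k ^ 2` bits, and the bits received there do not affect the nearest codeword.
-/

open Finset

/-- Hamming weight of a binary vector. -/
def wt {n : ℕ} (x : Fin n → ZMod 2) : ℕ := (Finset.univ.filter fun j => x j = 1).card

/-- Probability, over a vector of n i.i.d. Bernoulli(p) bits, of a set of binary vectors. -/
noncomputable def bscProb {n : ℕ} (p : ℝ) (E : Finset (Fin n → ZMod 2)) : ℝ :=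
  ∑ η ∈ E, p ^ wt η * (1 - p) ^ (n - wt η)

/-- Binary entropy function (base-2 logarithms). -/
noncomputable def binH (p : ℝ) : ℝ := -p * Real.logb 2 p - (1 - p) * Real.logb 2 (1 - p)

/-! ### Hamming weight -/

section Weight

variable {n r : ℕ}

/-- The Hamming sphere of radius `t` about the zero word. -/
def hammingSphere (n t : ℕ) : Finset (Fin n → ZMod 2) := {η | wt η = t}

/-- The closed Hamming ball of radius `t` about the zero word. -/
def hammingBall (n t : ℕ) : Finset (Fin n → ZMod 2) := {η | wt η ≤ t}

lemma mem_hammingSphere {t : ℕ} {η : Fin n → ZMod 2} : η ∈ hammingSphere n t ↔ wt η = t := by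
  simp only [hammingSphere, mem_filter_univ]

lemma mem_hammingBall {t : ℕ} {η : Fin n → ZMod 2} : η ∈ hammingBall n t ↔ wt η ≤ t := by
  simp only [hammingBall, mem_filter_univ]

lemma wt_le (η : Fin n → ZMod 2) : wt η ≤ n := by
  simpa only [wt, Fintype.card_fin] using card_le_univ {j | η j = 1}

lemma wt_append (x : Fin n → ZMod 2) (y : Fin r → ZMod 2) :
    wt (Fin.append x y) = wt x + wt y := by
  simp only [wt, card_filter, Fin.sum_univ_add, Fin.append_left, Fin.append_right]

lemma prod_ite_eq_pow_wt {R : Type*} [CommMonoid R] (x y : R) (η : Fin n → ZMod 2) :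
    ∏ j, (if η j = 1 then x else y) = x ^ wt η * y ^ (n - wt η) := by
  have hcard : #{j | ¬ η j = 1} = n - wt η := by
    rw [filter_not, card_sdiff_of_subset (filter_subset _ _), card_fin, wt]
  rw [prod_ite, prod_const, prod_const, hcard, wt]

lemma sum_pow_wt {R : Type*} [CommSemiring R] (n : ℕ) (x y : R) :
    ∑ η : Fin n → ZMod 2, x ^ wt η * y ^ (n - wt η) = (x + y) ^ n := by
  have hbit : ∑ b : ZMod 2, (if b = 1 then x else y) = x + y := by
    rw [show (univ : Finset (ZMod 2)) = {0, 1} from rfl, sum_pair zero_ne_one,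
      if_neg zero_ne_one, if_pos rfl, add_comm]
  simp_rw [← prod_ite_eq_pow_wt]
  rw [← Fintype.prod_sum fun (_ : Fin n) (b : ZMod 2) => if b = 1 then x else y]
  simp only [hbit, prod_const, card_fin]

end Weight

/-! ### The binary symmetric channel -/

section Channel

variable {n r : ℕ} {p ε : ℝ}

lemma bscProb_univ (p : ℝ) : bscProb p (univ : Finset (Fin n → ZMod 2)) = 1 := by
  rw [bscProb, sum_pow_wt, add_sub_cancel, one_pow]

lemma bscProb_mono (hp₀ : 0 ≤ p) (hp₁ : p ≤ 1) {E F : Finset (Fin n → ZMod 2)} (h : E ⊆ F) :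
    bscProb p E ≤ bscProb p F :=
  sum_le_sum_of_subset_of_nonneg h fun _ _ _ =>
    mul_nonneg (pow_nonneg hp₀ _) (pow_nonneg (sub_nonneg.2 hp₁) _)

lemma bscProb_le_one (hp₀ : 0 ≤ p) (hp₁ : p ≤ 1) (E : Finset (Fin n → ZMod 2)) :
    bscProb p E ≤ 1 :=
  (bscProb_mono hp₀ hp₁ (subset_univ E)).trans_eq (bscProb_univ p)

lemma bscProb_filter_add_bscProb_filter_not (p : ℝ) (E : Finset (Fin n → ZMod 2))
    (P : (Fin n → ZMod 2) → Prop) [DecidablePred P] :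
    bscProb p {η ∈ E | P η} + bscProb p {η ∈ E | ¬ P η} = bscProb p E :=
  sum_filter_add_sum_filter_not E P _

lemma bscProb_map_append (p : ℝ) (E : Finset (Fin n → ZMod 2)) (F : Finset (Fin r → ZMod 2)) :
    bscProb p ((E ×ˢ F).map (Fin.appendEquiv n r).toEmbedding) = bscProb p E * bscProb p F := by
  rw [bscProb, bscProb, bscProb, sum_map, sum_mul_sum, sum_product]
  refine sum_congr rfl fun x _ => sum_congr rfl fun y _ => ?_
  have hsub : n + r - (wt x + wt y) = (n - wt x) + (r - wt y) := by
    have := wt_le x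
    have := wt_le y
    omega
  change p ^ wt (Fin.append x y) * (1 - p) ^ (n + r - wt (Fin.append x y)) = _
  rw [wt_append, hsub, pow_add, pow_add]
  ring

lemma bscProb_eq_sum_card_sphere (p : ℝ) (E : Finset (Fin n → ZMod 2)) :
    bscProb p E = ∑ t ∈ range (n + 1), p ^ t * (1 - p) ^ (n - t) * #(E ∩ hammingSphere n t) := by
  rw [bscProb, ← sum_fiberwise_of_maps_to fun η _ => mem_range_succ_iff.2 (wt_le η)]
  refine sum_congr rfl fun t _ => ?_
  rw [hammingSphere, inter_filter, inter_univ, mul_comm, ← nsmul_eq_mul]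
  exact sum_eq_card_nsmul fun η hη => by rw [(mem_filter.1 hη).2]

lemma bscProb_le_of_card_inter_sphere_le (hp₀ : 0 ≤ p) (hp₁ : p ≤ 1)
    {E : Finset (Fin n → ZMod 2)} {c : ℝ}
    (h : ∀ t ≤ n, (#(E ∩ hammingSphere n t) : ℝ) ≤ c * #(hammingSphere n t)) :
    bscProb p E ≤ c := by
  have : 0 ≤ 1 - p := sub_nonneg.2 hp₁
  calc bscProb p E
      = ∑ t ∈ range (n + 1), p ^ t * (1 - p) ^ (n - t) * #(E ∩ hammingSphere n t) :=
        bscProb_eq_sum_card_sphere p E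
    _ ≤ ∑ t ∈ range (n + 1), p ^ t * (1 - p) ^ (n - t) * (c * #(hammingSphere n t)) := by
        gcongr with t ht
        exact h t (mem_range_succ_iff.1 ht)
    _ = c * bscProb p (univ : Finset (Fin n → ZMod 2)) := by
        simp only [bscProb_eq_sum_card_sphere p univ, univ_inter, mul_sum, mul_left_comm]
    _ = c := by rw [bscProb_univ, mul_one]

lemma bscProb_lt_wt_le_exp_mul (hp₀ : 0 ≤ p) (hp₁ : p ≤ 1) {s : ℝ} (hs : 0 ≤ s) (n : ℕ) (r : ℝ) :
    bscProb p {η : Fin n → ZMod 2 | r < wt η}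
      ≤ Real.exp (-(s * r)) * (p * Real.exp s + (1 - p)) ^ n := by
  have : 0 ≤ 1 - p := sub_nonneg.2 hp₁
  have htilt (w : ℕ) : Real.exp (-(s * r)) * ((p * Real.exp s) ^ w * (1 - p) ^ (n - w))
      = Real.exp (s * (w - r)) * (p ^ w * (1 - p) ^ (n - w)) := by
    rw [mul_pow, ← Real.exp_nat_mul, show s * (w - r) = -(s * r) + w * s by ring, Real.exp_add]
    ring
  rw [← sum_pow_wt, mul_sum, bscProb]
  refine sum_le_sum_of_subset_of_nonneg (subset_univ _) (fun η _ _ => by positivity)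
    |>.trans' (sum_le_sum fun η hη => ?_)
  rw [htilt]
  refine le_mul_of_one_le_left (by positivity) (Real.one_le_exp (mul_nonneg hs ?_))
  exact sub_nonneg.2 (mem_filter.1 hη).2.le

lemma bscProb_add_mul_lt_wt_le (hp₀ : 0 ≤ p) (hp₁ : p ≤ 1) (hε₀ : 0 ≤ ε) (hε₂ : ε ≤ 2) (n : ℕ) :
    bscProb p {η : Fin n → ZMod 2 | (p + ε) * n < wt η} ≤ Real.exp (-(ε ^ 2 / 4 * n)) := by
  -- The tilt `s = ε / 2` maximizes `s * ε - s ^ 2`.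
  set s : ℝ := ε / 2 with hs
  have hexp : Real.exp s ≤ 1 + s + s ^ 2 := by
    have hs₁ : |s| ≤ 1 := abs_le.2 ⟨by linarith, by linarith⟩
    linarith [(abs_le.1 (Real.abs_exp_sub_one_sub_id_le hs₁)).2]
  have hmgf : p * Real.exp s + (1 - p) ≤ Real.exp (p * s + s ^ 2) := by
    nlinarith [Real.add_one_le_exp (p * s + s ^ 2)]
  calc bscProb p {η : Fin n → ZMod 2 | (p + ε) * n < wt η}
      ≤ Real.exp (-(s * ((p + ε) * n))) * (p * Real.exp s + (1 - p)) ^ n :=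
        bscProb_lt_wt_le_exp_mul hp₀ hp₁ (by positivity) n _
    _ ≤ Real.exp (-(s * ((p + ε) * n))) * Real.exp (p * s + s ^ 2) ^ n := by
        have : 0 ≤ 1 - p := sub_nonneg.2 hp₁
        gcongr
    _ = Real.exp (-(ε ^ 2 / 4 * n)) := by
        rw [← Real.exp_nat_mul, ← Real.exp_add, hs]
        ring_nf

end Channel

/-! ### Entropy bound for Hamming balls -/

section Entropy

variable {n t : ℕ} {p ε : ℝ}

lemma binH_eq_binEntropy_div_log (p : ℝ) : binH p = Real.binEntropy p / Real.log 2 := by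
  rw [binH, Real.binEntropy_eq_negMulLog_add_negMulLog_one_sub, Real.negMulLog, Real.negMulLog,
    Real.logb, Real.logb]
  ring

lemma binH_nonneg (hp₀ : 0 ≤ p) (hp₁ : p ≤ 1) : 0 ≤ binH p := by
  rw [binH_eq_binEntropy_div_log]
  exact div_nonneg (Real.binEntropy_nonneg hp₀ hp₁) (Real.log_nonneg one_le_two)

lemma two_rpow_neg_le_pow_mul_pow (hp₀ : 0 < p) (hp₁ : p ≤ 1 / 2) (htn : t ≤ n)
    (ht : (t : ℝ) ≤ (p + ε) * n) :
    (2 : ℝ) ^ (-(n * (binH p + ε * Real.logb 2 ((1 - p) / p)))) ≤ p ^ t * (1 - p) ^ (n - t) := by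
  have hq₀ : 0 < 1 - p := by linarith
  have hL : 0 ≤ Real.logb 2 (1 - p) - Real.logb 2 p :=
    sub_nonneg.2 (Real.logb_le_logb_of_le one_lt_two hp₀ (by linarith))
  have hpow (x : ℝ) (hx : 0 < x) (i : ℕ) : x ^ i = (2 : ℝ) ^ (Real.logb 2 x * i) := by
    rw [Real.rpow_mul_natCast two_pos.le, Real.rpow_logb two_pos one_lt_two.ne' hx]
  rw [hpow p hp₀, hpow (1 - p) hq₀, ← Real.rpow_add two_pos, Nat.cast_sub htn,
    Real.logb_div hq₀.ne' hp₀.ne', binH]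
  refine Real.rpow_le_rpow_of_exponent_le one_le_two ?_
  linear_combination mul_le_mul_of_nonneg_right ht hL

lemma card_hammingBall_le (hp₀ : 0 < p) (hp₁ : p ≤ 1 / 2) (ht : (t : ℝ) ≤ (p + ε) * n) :
    (#(hammingBall n t) : ℝ) ≤ 2 ^ (n * (binH p + ε * Real.logb 2 ((1 - p) / p))) := by
  set x : ℝ := n * (binH p + ε * Real.logb 2 ((1 - p) / p))
  have hprob : #(hammingBall n t) * (2 : ℝ) ^ (-x) ≤ 1 := by
    calc #(hammingBall n t) * (2 : ℝ) ^ (-x)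
        = ∑ _η ∈ hammingBall n t, (2 : ℝ) ^ (-x) := by rw [sum_const, nsmul_eq_mul]
      _ ≤ bscProb p (hammingBall n t) := sum_le_sum fun η hη =>
          two_rpow_neg_le_pow_mul_pow hp₀ hp₁ (wt_le η)
            ((Nat.cast_le.2 (mem_hammingBall.1 hη)).trans ht)
      _ ≤ 1 := bscProb_le_one hp₀.le (by linarith) _
  rwa [Real.rpow_neg two_pos.le, ← div_eq_mul_inv, div_le_one (by positivity)] at hprob

end Entropy

/-! ### Minimum-distance decoding -/

section Decoding

variable {V : Type*} [AddCommGroup V] [Module (ZMod 2) V] {n : ℕ}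

/-- Minimum-distance decoding for the encoder `C`, with ties broken arbitrarily. -/
noncomputable def minDistDecode (C : V →ₗ[ZMod 2] Fin n → ZMod 2) (y : Fin n → ZMod 2) : V :=
  Function.argmin fun a => wt (y - C a)

open Classical in
/-- The noise vectors `η` for which some nonzero codeword is at least as close to `η` as the zero
codeword. Over `ZMod 2` the distance from `C a` to `η` is `wt (C a + η)`. -/
noncomputable def confusable (C : V →ₗ[ZMod 2] Fin n → ZMod 2) : Finset (Fin n → ZMod 2) :=
  {η | ∃ a ≠ 0, wt (C a + η) ≤ wt η}

lemma mem_confusable {C : V →ₗ[ZMod 2] Fin n → ZMod 2} {η : Fin n → ZMod 2} :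
    η ∈ confusable C ↔ ∃ a ≠ 0, wt (C a + η) ≤ wt η := by
  simp only [confusable, mem_filter_univ]

lemma mem_confusable_of_minDistDecode_ne {C : V →ₗ[ZMod 2] Fin n → ZMod 2} {m : V}
    {η : Fin n → ZMod 2} (h : minDistDecode C (C m + η) ≠ m) : η ∈ confusable C := by
  refine mem_confusable.2 ⟨m - minDistDecode C (C m + η), sub_ne_zero.2 h.symm, ?_⟩
  calc wt (C (m - minDistDecode C (C m + η)) + η)
      = wt (C m + η - C (minDistDecode C (C m + η))) := by rw [map_sub, sub_add_eq_add_sub]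
    _ ≤ wt (C m + η - C m) := Function.argmin_le (fun a => wt (C m + η - C a)) m
    _ = wt η := by rw [add_sub_cancel_left]

end Decoding

/-! ### Prefixes of rateless linear encoders -/

section Prefix

variable {K V : Type*} [Semiring K] [AddCommMonoid V] [Module K V] {N n : ℕ}

/-- The encoder of length `n` that sends the first `n` symbols of the rateless encoder `e`. -/
def prefixCode (e : V →ₗ[K] ℕ → K) (n : ℕ) : V →ₗ[K] Fin n → K :=
  LinearMap.funLeft K K Fin.val ∘ₗ e

/-- The rateless encoder that sends the `N` symbols of `G a` and then zeros forever. -/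
noncomputable def zeroExtend (G : V →ₗ[K] Fin N → K) : V →ₗ[K] ℕ → K :=
  Function.ExtendByZero.linearMap K Fin.val ∘ₗ G

lemma zeroExtend_apply_of_le (G : V →ₗ[K] Fin N → K) (a : V) {j : ℕ} (hj : N ≤ j) :
    zeroExtend G a j = 0 :=
  Function.extend_apply' _ _ _ fun ⟨i, hi⟩ => (hi ▸ i.2).not_ge hj

lemma prefixCode_zeroExtend (G : V →ₗ[K] Fin N → K) (hn : n ≤ N) :
    prefixCode (zeroExtend G) n = LinearMap.funLeft K K (Fin.castLE hn) ∘ₗ G :=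
  LinearMap.ext fun a => funext fun j =>
    Fin.val_injective.extend_apply (G a) 0 (Fin.castLE hn j)

end Prefix

section Truncation

variable {V : Type*} [AddCommGroup V] [Module (ZMod 2) V] {n r : ℕ} {e : V →ₗ[ZMod 2] ℕ → ZMod 2}

lemma append_mem_confusable_prefixCode (he : ∀ a, ∀ j ≥ n, e a j = 0) (x : Fin n → ZMod 2)
    (y : Fin r → ZMod 2) :
    Fin.append x y ∈ confusable (prefixCode e (n + r)) ↔ x ∈ confusable (prefixCode e n) := by
  have hadd (a : V) : prefixCode e (n + r) a + Fin.append x y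
      = Fin.append (prefixCode e n a + x) y := by
    funext j
    refine Fin.addCases (fun i => ?_) (fun i => ?_) j
    · simp [prefixCode, LinearMap.funLeft]
    · simp [prefixCode, LinearMap.funLeft, he]
  simp only [mem_confusable, hadd, wt_append, add_le_add_iff_right]

lemma bscProb_confusable_prefixCode_add (he : ∀ a, ∀ j ≥ n, e a j = 0) (p : ℝ) :
    bscProb p (confusable (prefixCode e (n + r))) = bscProb p (confusable (prefixCode e n)) := by
  have hcyl : confusable (prefixCode e (n + r))
      = (confusable (prefixCode e n) ×ˢ univ).map (Fin.appendEquiv n r).toEmbedding := by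
    ext η
    obtain ⟨⟨x, y⟩, rfl⟩ := (Fin.appendEquiv n r).surjective η
    rw [mem_map_equiv, Equiv.symm_apply_apply, mem_product, and_iff_left (mem_univ y)]
    exact append_mem_confusable_prefixCode he x y
  rw [hcyl, bscProb_map_append, bscProb_univ, mul_one]

lemma bscProb_confusable_prefixCode_min {N : ℕ} (he : ∀ a, ∀ j ≥ N, e a j = 0) (p : ℝ) (n : ℕ) :
    bscProb p (confusable (prefixCode e n))
      = bscProb p (confusable (prefixCode e (min n N))) := by
  obtain h | h := le_total n N
  · rw [min_eq_left h]
  · obtain ⟨r, rfl⟩ := Nat.exists_eq_add_of_le h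
    rw [min_eq_right h, bscProb_confusable_prefixCode_add he]

end Truncation

/-! ### Random linear codes -/

lemma exists_forall_le_card_mul_of_sum_le {𝕜 ι Γ : Type*} [Field 𝕜] [LinearOrder 𝕜]
    [IsStrictOrderedRing 𝕜] [Fintype ι] [Fintype Γ] [Nonempty Γ] (X : Γ → ι → 𝕜) (w : ι → 𝕜)
    (hX : ∀ g i, 0 ≤ X g i) (h : ∀ i, ∑ g, X g i ≤ Fintype.card Γ * w i) :
    ∃ g, ∀ i, X g i ≤ Fintype.card ι * w i := by
  have hcard : (0 : 𝕜) < Fintype.card Γ := Nat.cast_pos.2 Fintype.card_pos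
  have hw (i : ι) : 0 ≤ w i :=
    nonneg_of_mul_nonneg_right ((sum_nonneg fun g _ => hX g i).trans (h i)) hcard
  have hnorm : ∑ g, ∑ i, X g i / w i ≤ ∑ _g : Γ, (Fintype.card ι : 𝕜) := by
    calc ∑ g, ∑ i, X g i / w i = ∑ i, (∑ g, X g i) / w i := by
          rw [sum_comm]
          simp only [sum_div]
      _ ≤ ∑ _i : ι, (Fintype.card Γ : 𝕜) := by
          gcongr with i
          exact div_le_of_le_mul₀ (hw i) hcard.le (h i)
      _ = ∑ _g : Γ, (Fintype.card ι : 𝕜) := by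
          simp only [sum_const, nsmul_eq_mul, card_univ, mul_comm]
  obtain ⟨g, -, hg⟩ := exists_le_of_sum_le univ_nonempty hnorm
  refine ⟨g, fun i => ?_⟩
  obtain hwi | hwi := (hw i).eq_or_lt
  -- Here `X g i / w i` is the junk value `0`, but the mean of `X · i` vanishes.
  · have hXi := single_le_sum (fun g _ => hX g i) (mem_univ g)
    have hi := h i
    rw [← hwi, mul_zero] at hi ⊢
    exact hXi.trans hi
  · rw [← div_le_iff₀ hwi]
    exact (single_le_sum (fun i _ => div_nonneg (hX g i) (hw i)) (mem_univ i)).trans hg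

lemma card_mul_card_filter_map_mem {F A B : Type*} [AddGroup A] [Fintype A] [AddMonoid B]
    [Fintype B] [DecidableEq B] [FunLike F A B] [AddMonoidHomClass F A B] {f : F}
    (hf : Function.Surjective f) (S : Finset B) :
    Fintype.card B * #{x | f x ∈ S} = Fintype.card A * #S := by
  have hfiber (b : B) : #{x | f x = b} = #{x | f x = 0} :=
    AddMonoidHom.card_fiber_eq_of_mem_range f (hf b) (hf 0)
  have hcount (T : Finset B) : #{x | f x ∈ T} = #T * #{x | f x = 0} := by
    rw [← sum_card_fiberwise_eq_card_filter]
    simp only [hfiber, sum_const, smul_eq_mul]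
  have hA : Fintype.card A = Fintype.card B * #{x | f x = 0} := by
    simpa only [mem_univ, filter_true, card_univ] using hcount univ
  rw [hA, hcount]
  ring

section RandomCode

variable {K V W : Type*} [Field K] [AddCommGroup V] [Module K V] [AddCommGroup W] [Module K W]

lemma surjective_linearMap_eval {a : V} (ha : a ≠ 0) :
    Function.Surjective fun f : V →ₗ[K] W => f a := fun w =>
  have ⟨φ, hφ⟩ := Module.Projective.exists_dual_eq_one K ha
  ⟨φ.smulRight w, by simp only [LinearMap.smulRight_apply, hφ, one_smul]⟩

lemma card_mul_card_filter_prefixCode_mem [Fintype K] [DecidableEq K] {N n : ℕ}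
    [Fintype (V →ₗ[K] Fin N → K)] (hn : n ≤ N) {a : V} (ha : a ≠ 0) (S : Finset (Fin n → K)) :
    Fintype.card (Fin n → K) * #{G : V →ₗ[K] Fin N → K | prefixCode (zeroExtend G) n a ∈ S}
      = Fintype.card (V →ₗ[K] Fin N → K) * #S := by
  simp only [prefixCode_zeroExtend _ hn]
  exact card_mul_card_filter_map_mem
    (f := LinearMap.funLeft K K (Fin.castLE hn) ∘ₗ LinearMap.applyₗ (R := K) a)
    ((LinearMap.funLeft_surjective_of_injective K K _ (Fin.castLE_injective hn)).comp
      (surjective_linearMap_eval ha)) S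

end RandomCode

section FirstMoment

variable {V : Type*} [AddCommGroup V] [Module (ZMod 2) V] [Fintype V] {n : ℕ}

lemma card_confusable_inter_sphere_le [DecidableEq V] (C : V →ₗ[ZMod 2] Fin n → ZMod 2) (t : ℕ) :
    #(confusable C ∩ hammingSphere n t)
      ≤ ∑ a : V with a ≠ 0, #{η ∈ hammingSphere n t | C a + η ∈ hammingBall n t} := by
  refine (card_le_card fun η hη => ?_).trans card_biUnion_le
  obtain ⟨hconf, hη⟩ := mem_inter.1 hη
  obtain ⟨a, ha, hle⟩ := mem_confusable.1 hconf
  refine mem_biUnion.2 ⟨a, (mem_filter_univ a).2 ha, mem_filter.2 ⟨hη, mem_hammingBall.2 ?_⟩⟩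
  rwa [mem_hammingSphere.1 hη] at hle

lemma two_pow_mul_sum_card_confusable_le {Γ : Type*} [Fintype Γ]
    {C : Γ → V →ₗ[ZMod 2] Fin n → ZMod 2}
    (hC : ∀ a ≠ 0, ∀ S : Finset (Fin n → ZMod 2),
      2 ^ n * #{g | C g a ∈ S} = Fintype.card Γ * #S) (t : ℕ) :
    2 ^ n * ∑ g, #(confusable (C g) ∩ hammingSphere n t)
      ≤ Fintype.card Γ * (Fintype.card V * #(hammingSphere n t) * #(hammingBall n t)) := by
  classical
  have hpair (a : V) (ha : a ≠ 0) (η : Fin n → ZMod 2) :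
      2 ^ n * #{g | C g a + η ∈ hammingBall n t} = Fintype.card Γ * #(hammingBall n t) := by
    simpa only [mem_map_equiv, Equiv.symm_symm, Equiv.coe_addRight, card_map] using
      hC a ha ((hammingBall n t).map (Equiv.addRight η).symm.toEmbedding)
  calc 2 ^ n * ∑ g, #(confusable (C g) ∩ hammingSphere n t)
      ≤ 2 ^ n * ∑ g, ∑ a : V with a ≠ 0,
          #{η ∈ hammingSphere n t | C g a + η ∈ hammingBall n t} := by
        gcongr with g
        exact card_confusable_inter_sphere_le (C g) t
    _ = ∑ a : V with a ≠ 0, ∑ η ∈ hammingSphere n t,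
          2 ^ n * #{g | C g a + η ∈ hammingBall n t} := by
        rw [sum_comm]
        simp only [card_filter, sum_comm (s := univ (α := Γ)), mul_sum]
    _ = ∑ a : V with a ≠ 0, ∑ _η ∈ hammingSphere n t, Fintype.card Γ * #(hammingBall n t) :=
        sum_congr rfl fun a ha => sum_congr rfl fun η _ =>
          hpair a ((mem_filter_univ a).1 ha) η
    _ ≤ ∑ _a : V, ∑ _η ∈ hammingSphere n t, Fintype.card Γ * #(hammingBall n t) :=
        sum_le_sum_of_subset (subset_univ _)
    _ = Fintype.card Γ * (Fintype.card V * #(hammingSphere n t) * #(hammingBall n t)) := by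
        simp only [sum_const, smul_eq_mul, card_univ]
        ring

/-- `C` is random-like up to the factor `M` if, for each weight `t`, it has at most `M` times
as many confusable noise vectors of weight `t` as the first-moment bound allows a uniformly random
linear encoder to have on average. This is what the error analysis needs to know about a code. -/
def IsRandomLike (C : V →ₗ[ZMod 2] Fin n → ZMod 2) (M : ℝ) : Prop :=
  ∀ t ≤ n, (#(confusable C ∩ hammingSphere n t) : ℝ)
    ≤ M * (Fintype.card V * #(hammingSphere n t) * #(hammingBall n t) / 2 ^ n)

variable (V) in
lemma exists_isRandomLike_prefixCode (N : ℕ) :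
    ∃ G : V →ₗ[ZMod 2] Fin N → ZMod 2, ∀ n ≤ N,
      IsRandomLike (prefixCode (zeroExtend G) n) ((N + 1) ^ 2) := by
  have : Fintype (V →ₗ[ZMod 2] Fin N → ZMod 2) :=
    have := Finite.of_injective _ (DFunLike.coe_injective (F := V →ₗ[ZMod 2] Fin N → ZMod 2))
    Fintype.ofFinite _
  obtain ⟨G, hG⟩ := exists_forall_le_card_mul_of_sum_le
    (fun (G : V →ₗ[ZMod 2] Fin N → ZMod 2) (i : Fin (N + 1) × Fin (N + 1)) =>
      (#(confusable (prefixCode (zeroExtend G) i.1) ∩ hammingSphere i.1 i.2) : ℝ))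
    (fun i => Fintype.card V * #(hammingSphere i.1 i.2) * #(hammingBall i.1 i.2) / 2 ^ (i.1 : ℕ))
    (fun G i => Nat.cast_nonneg _) fun i => by
      rw [← mul_div_assoc, le_div_iff₀' (by positivity)]
      exact_mod_cast two_pow_mul_sum_card_confusable_le
        (C := fun G => prefixCode (zeroExtend G) i.1) (fun a ha S => by
          simpa only [Fintype.card_pi_const, ZMod.card] using
            card_mul_card_filter_prefixCode_mem i.1.is_le ha S) i.2
  refine ⟨G, fun n hn t ht => ?_⟩
  simpa [sq] using hG (⟨n, by omega⟩, ⟨t, by omega⟩)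

end FirstMoment

/-! ### Error probability -/

lemma bscProb_confusable_le {V : Type*} [AddCommGroup V] [Module (ZMod 2) V] [Fintype V] {n : ℕ}
    {C : V →ₗ[ZMod 2] Fin n → ZMod 2} {M p ε : ℝ} (hM : 0 ≤ M) (hC : IsRandomLike C M)
    (hp₀ : 0 < p) (hp₁ : p ≤ 1 / 2) (hε₀ : 0 ≤ ε) (hε₂ : ε ≤ 2) :
    bscProb p (confusable C)
      ≤ M * (Fintype.card V * 2 ^ (n * (binH p + ε * Real.logb 2 ((1 - p) / p))) / 2 ^ n)
        + Real.exp (-(ε ^ 2 / 4 * n)) := by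
  set B : ℝ := 2 ^ (n * (binH p + ε * Real.logb 2 ((1 - p) / p)))
  have hlight : bscProb p {η ∈ confusable C | ¬ (p + ε) * n < wt η}
      ≤ M * (Fintype.card V * B / 2 ^ n) := by
    refine bscProb_le_of_card_inter_sphere_le hp₀.le (by linarith) fun t htn => ?_
    obtain ht | ht := lt_or_ge ((p + ε) * n) t
    · have hempty : {η ∈ confusable C | ¬ (p + ε) * n < wt η} ∩ hammingSphere n t = ∅ := by
        refine eq_empty_of_forall_notMem fun η hη => ?_
        obtain ⟨hη, hηt⟩ := mem_inter.1 hη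
        exact (mem_filter.1 hη).2 (mem_hammingSphere.1 hηt ▸ ht)
      rw [hempty, card_empty, Nat.cast_zero]
      positivity
    · calc (#({η ∈ confusable C | ¬ (p + ε) * n < wt η} ∩ hammingSphere n t) : ℝ)
          ≤ #(confusable C ∩ hammingSphere n t) := by
            gcongr
            exact filter_subset _ _
        _ ≤ M * (Fintype.card V * #(hammingSphere n t) * #(hammingBall n t) / 2 ^ n) := hC t htn
        _ ≤ M * (Fintype.card V * #(hammingSphere n t) * B / 2 ^ n) := by
            gcongr
            exact card_hammingBall_le hp₀ hp₁ ht
        _ = M * (Fintype.card V * B / 2 ^ n) * #(hammingSphere n t) := by ring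
  have hheavy : bscProb p {η ∈ confusable C | (p + ε) * n < wt η}
      ≤ Real.exp (-(ε ^ 2 / 4 * n)) :=
    (bscProb_mono hp₀.le (by linarith) (filter_subset_filter _ (subset_univ _))).trans
      (bscProb_add_mul_lt_wt_le hp₀.le (by linarith) hε₀ hε₂ n)
  rw [← bscProb_filter_add_bscProb_filter_not p _ fun η => (p + ε) * n < wt η, add_comm]
  exact add_le_add hlight hheavy

lemma eventually_polynomial_eval_le_two_rpow (P : Polynomial ℝ) {c : ℝ} (hc : 0 < c) :
    ∀ᶠ x : ℝ in Filter.atTop, P.eval x ≤ 2 ^ (c * x) := by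
  have hlittle :
      (fun x : ℝ => P.eval x) =o[Filter.atTop] fun x => Real.exp (Real.log 2 * c * x) := by
    simp only [Polynomial.eval_eq_sum_range]
    exact .fun_sum fun i _ => (isLittleO_pow_exp_pos_mul_atTop i
      (mul_pos (Real.log_pos one_lt_two) hc)).const_mul_left _
  filter_upwards [hlittle.bound one_pos] with x hx
  rw [Real.rpow_def_of_pos two_pos, ← mul_assoc]
  simpa only [one_mul, Real.norm_eq_abs, Real.abs_exp] using (le_abs_self _).trans hx

lemma two_pow_mul_two_rpow_div_two_pow_le {p δ x : ℝ} {k n : ℕ} (hδ : 0 ≤ δ) (hkn : k ≤ n)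
    (hk : (k : ℝ) ≤ n * (1 - binH p - δ)) (hx : x ≤ δ / 2) :
    2 ^ k * (2 : ℝ) ^ (n * (binH p + x)) / 2 ^ n ≤ 2 ^ (-(δ / 2 * k)) := by
  rw [← Real.rpow_natCast, ← Real.rpow_natCast, ← Real.rpow_add two_pos, ← Real.rpow_sub two_pos]
  refine Real.rpow_le_rpow_of_exponent_le one_le_two ?_
  have hkn' : (k : ℝ) ≤ n := Nat.cast_le.2 hkn
  linear_combination hk + (n : ℝ) * hx + δ / 2 * hkn'

lemma exists_bscProb_confusable_le_mul_two_rpow {p δ : ℝ} (hp₀ : 0 < p) (hp₁ : p < 1 / 2)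
    (hδ : 0 < δ) :
    ∃ c > 0, ∀ k n : ℕ, (k : ℝ) ≤ n * (1 - binH p - δ) →
      ∀ (C : (Fin k → ZMod 2) →ₗ[ZMod 2] Fin n → ZMod 2) (M : ℝ), 0 ≤ M → IsRandomLike C M →
        bscProb p (confusable C) ≤ (M + 1) * 2 ^ (-(c * k) : ℝ) := by
  set L : ℝ := Real.logb 2 ((1 - p) / p)
  have hL : 0 < L := Real.logb_pos one_lt_two ((one_lt_div hp₀).2 (by linarith))
  set ε : ℝ := min 1 (δ / 2 / L)
  have hε₀ : 0 < ε := by positivity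
  have hε₁ : ε ≤ 1 := min_le_left _ _
  have hεL : ε * L ≤ δ / 2 := (le_div_iff₀ hL).1 (min_le_right _ _)
  refine ⟨min (δ / 2) (ε ^ 2 / 4), by positivity, fun k n hk C M hM hC => ?_⟩
  set c : ℝ := min (δ / 2) (ε ^ 2 / 4)
  have hkn : (k : ℝ) ≤ n :=
    hk.trans (mul_le_of_le_one_right n.cast_nonneg (by linarith [binH_nonneg hp₀.le (by linarith)]))
  have hball : 2 ^ k * (2 : ℝ) ^ (n * (binH p + ε * L)) / 2 ^ n ≤ 2 ^ (-(c * k)) := by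
    refine (two_pow_mul_two_rpow_div_two_pow_le hδ.le (Nat.cast_le.1 hkn) hk hεL).trans ?_
    gcongr
    exacts [one_le_two, min_le_left _ _]
  have htail : Real.exp (-(ε ^ 2 / 4 * n)) ≤ 2 ^ (-(c * k)) := by
    have hexponent : c * k ≤ ε ^ 2 / 4 * n := by
      gcongr
      exact min_le_right _ _
    have hlog : Real.log 2 * (c * k) ≤ c * k :=
      mul_le_of_le_one_left (by positivity) (by linarith [Real.log_two_lt_d9])
    rw [Real.rpow_def_of_pos two_pos, Real.exp_le_exp]
    linarith
  calc bscProb p (confusable C)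
      ≤ M * (2 ^ k * 2 ^ (n * (binH p + ε * L)) / 2 ^ n) + Real.exp (-(ε ^ 2 / 4 * n)) := by
        simpa using bscProb_confusable_le hM hC hp₀ hp₁.le hε₀.le (by linarith)
    _ ≤ M * 2 ^ (-(c * k)) + 2 ^ (-(c * k)) := by gcongr
    _ = (M + 1) * 2 ^ (-(c * k)) := by ring

theorem stmt18_general :
    ∃ E : (k : ℕ) → (Fin k → ZMod 2) →ₗ[ZMod 2] (ℕ → ZMod 2),
    ∃ D : (k n : ℕ) → (Fin n → ZMod 2) → (Fin k → ZMod 2),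
      ∀ p δ : ℝ, 0 < p → p < 1 / 2 → 0 < δ → δ < 1 - binH p →
        ∃ c : ℝ, 0 < c ∧ ∃ k₀ : ℕ, ∀ k : ℕ, k₀ ≤ k →
          ∀ n : ℕ, (k : ℝ) / (1 - binH p - δ) ≤ (n : ℝ) →
            ∀ m : Fin k → ZMod 2,
              bscProb p (Finset.univ.filter fun η : Fin n → ZMod 2 =>
                  D k n ((fun j : Fin n => E k m (j : ℕ)) + η) ≠ m) ≤
                (2 : ℝ) ^ (-c * (k : ℝ)) := by
  choose G hG using fun k : ℕ => exists_isRandomLike_prefixCode (Fin k → ZMod 2) (k ^ 2)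
  refine ⟨fun k => zeroExtend (G k),
    fun k n => minDistDecode (prefixCode (zeroExtend (G k)) n), fun p δ hp₀ hp₁ hδ hδ' => ?_⟩
  have hR : 0 < 1 - binH p - δ := sub_pos.2 hδ'
  obtain ⟨c, hc, herr⟩ := exists_bscProb_confusable_le_mul_two_rpow hp₀ hp₁ hδ
  have hpoly : ∀ᶠ k : ℕ in Filter.atTop, (((k ^ 2 : ℕ) : ℝ) + 1) ^ 2 + 1 ≤ 2 ^ (c / 2 * k) := by
    filter_upwards [tendsto_natCast_atTop_atTop.eventually (eventually_polynomial_eval_le_two_rpow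
      (((.X : Polynomial ℝ) ^ 2 + 1) ^ 2 + 1) (half_pos hc))] with k hk
    simpa using hk
  obtain ⟨k₀, hk₀⟩ := Filter.eventually_atTop.1 (hpoly.and
    (tendsto_natCast_atTop_atTop.eventually_ge_atTop (1 / (1 - binH p - δ))))
  refine ⟨c / 2, half_pos hc, k₀, fun k hk n hn m => ?_⟩
  obtain ⟨hpoly_k, hRk⟩ := hk₀ k hk
  have hrate : (k : ℝ) ≤ (min n (k ^ 2) : ℕ) * (1 - binH p - δ) := by
    rw [← div_le_iff₀ hR, Nat.cast_min, Nat.cast_pow, sq, div_eq_mul_one_div]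
    rw [div_eq_mul_one_div] at hn
    exact le_min hn (by gcongr)
  calc bscProb p {η | minDistDecode _ (prefixCode (zeroExtend (G k)) n m + η) ≠ m}
      ≤ bscProb p (confusable (prefixCode (zeroExtend (G k)) n)) :=
        bscProb_mono hp₀.le (by linarith) fun η hη =>
          mem_confusable_of_minDistDecode_ne ((mem_filter_univ η).1 hη)
    _ = bscProb p (confusable (prefixCode (zeroExtend (G k)) (min n (k ^ 2)))) :=
        bscProb_confusable_prefixCode_min (fun a j => zeroExtend_apply_of_le (G k) a) p n
    _ ≤ ((((k ^ 2 : ℕ) : ℝ) + 1) ^ 2 + 1) * 2 ^ (-(c * k)) :=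
        herr k _ hrate _ _ (by positivity) (hG k _ (min_le_right _ _))
    _ ≤ 2 ^ (c / 2 * k) * 2 ^ (-(c * k)) := by gcongr
    _ = 2 ^ (-(c / 2) * k) := by
        rw [← Real.rpow_add two_pos]
        ring_nf

theorem stmt18 (β : ℕ → ℝ) (hβ1 : ∀ k, 1 ≤ β k)
    (hβ : Filter.Tendsto β Filter.atTop Filter.atTop) :
    ∃ E : (k : ℕ) → (Fin k → ZMod 2) → (ℕ → ZMod 2),
    ∃ D : (k n : ℕ) → (Fin n → ZMod 2) → (Fin k → ZMod 2),
      ∀ p δ : ℝ, 0 < p → p < 1 / 2 → 0 < δ → δ < 1 - binH p →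
        ∃ c : ℝ, 0 < c ∧ ∃ k₀ : ℕ, ∀ k : ℕ, k₀ ≤ k →
          ∀ n : ℕ, (k : ℝ) / (1 - binH p - δ) ≤ (n : ℝ) →
            ∀ m : Fin k → ZMod 2,
              bscProb p (Finset.univ.filter fun η : Fin n → ZMod 2 =>
                  D k n ((fun j : Fin n => E k m (j : ℕ)) + η) ≠ m) ≤
                (2 : ℝ) ^ (-c * (k : ℝ) / β k) := by
  obtain ⟨E, D, h⟩ := stmt18_general
  refine ⟨fun k => E k, D, fun p δ hp₀ hp₁ hδ hδ' => ?_⟩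
  obtain ⟨c, hc, k₀, herr⟩ := h p δ hp₀ hp₁ hδ hδ'
  refine ⟨c, hc, k₀, fun k hk n hn m => (herr k hk n hn m).trans ?_⟩
  rw [neg_mul, neg_div]
  exact Real.rpow_le_rpow_of_exponent_le one_le_two
    (neg_le_neg (div_le_self (by positivity) (hβ1 k)))
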